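/- arXiv:2402.14113 — 2 statements merged into one kernel-verified Lean document; each statement's English description precedes it below -/
import Mathlib

section
/- For every integer k ≥ 7 and every integer n > 2^{2^{k-1}}, every saturated k-Sperner system F ⊆ P([n]) satisfies |F| ≥ 2^{k/2 + (1/2)·log₂ k − 1.66} (equivalently, |F| ≥ 2^{−1.66} · √k · 2^{k/2}). -/
open Finset

/-- A family contains a chain of `m` sets `C 0 ⊊ C 1 ⊊ ⋯ ⊊ C (m-1)`. -/
def HasChainOfLen {α : Type*} [DecidableEq α] (F : Finset (Finset α)) (m : ℕ) : Prop :=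
  ∃ C : Fin m → Finset α, StrictMono C ∧ ∀ i, C i ∈ F

/-- `F ⊆ P(X)` is a saturated `k`-Sperner system: it has no chain of `k+1` sets,
and adding any `S ⊆ X` with `S ∉ F` creates a chain of `k+1` sets. -/
def IsSatKSperner {α : Type*} [DecidableEq α] (X : Finset α) (F : Finset (Finset α))
    (k : ℕ) : Prop :=
  (∀ A ∈ F, A ⊆ X) ∧ ¬ HasChainOfLen F (k + 1) ∧
    ∀ S ⊆ X, S ∉ F → HasChainOfLen (insert S F) (k + 1)

/-- `H` is a homogeneous atom for `F` in `P(X)`: `H ⊆ X` is maximal with the property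
that every member of `F` contains all of `H` or none of it, and `|H| ≥ 2`. -/
def IsHomogAtom {α : Type*} [DecidableEq α] (X : Finset α) (F : Finset (Finset α))
    (H : Finset α) : Prop :=
  H ⊆ X ∧ (∀ S ∈ F, S ∩ H = ∅ ∨ S ∩ H = H) ∧
    (∀ B ⊆ X, (∀ S ∈ F, S ∩ B = ∅ ∨ S ∩ B = B) → H ⊆ B → H = B) ∧
    2 ≤ H.card

/-- The small members of `F` (those disjoint from the homogeneous atom `H`). -/
def smallSets {α : Type*} [DecidableEq α] (F : Finset (Finset α)) (H : Finset α) :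
    Finset (Finset α) :=
  F.filter fun S => S ∩ H = ∅

/-- The large members of `F` (those containing the homogeneous atom `H`). -/
def largeSets {α : Type*} [DecidableEq α] (F : Finset (Finset α)) (H : Finset α) :
    Finset (Finset α) :=
  F.filter fun S => H ⊆ S

/-- The minimal elements (under inclusion) of a family of sets. -/
def minimalsIn {α : Type*} [DecidableEq α] (G : Finset (Finset α)) : Finset (Finset α) :=
  G.filter fun A => ∀ B ∈ G, B ⊆ A → B = A

/-- What remains of `F` after stripping off minimal elements `i` times. -/
def canonRest {α : Type*} [DecidableEq α] (F : Finset (Finset α)) : ℕ → Finset (Finset α)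
  | 0 => F
  | i + 1 => canonRest F i \ minimalsIn (canonRest F i)

/-- The canonical decomposition of `F` into antichains:
`canonDecomp F i` is the family of minimal elements of `F \ ⋃_{j<i} canonDecomp F j`. -/
def canonDecomp {α : Type*} [DecidableEq α] (F : Finset (Finset α)) (i : ℕ) :
    Finset (Finset α) :=
  minimalsIn (canonRest F i)

/-- A sequence `(D i)_{i=0}^t` of families is layered if for `1 ≤ i ≤ t`,
every member of `D i` strictly contains some member of `D (i-1)`. -/
def Layered {α : Type*} [DecidableEq α] (D : ℕ → Finset (Finset α)) (t : ℕ) : Prop :=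
  ∀ i, 1 ≤ i → i ≤ t → ∀ A ∈ D i, ∃ B ∈ D (i - 1), B ⊂ A

/-!
If `|F| ≥ 2 ^ (k - 1)` the bound is clear. Otherwise `2 ^ |F| < |X|`, so some two points of `X` lie
in exactly the same members of `F` and there is a homogeneous set `H` with at least two points; each
member of `F` is small (disjoint from `H`) or large (contains `H`). Let `𝒮 a` be the `a`-th level of
the canonical decomposition of the small sets and `𝒯 b` the `b`-th level for the complements of the
large sets.

Let `a + b = k - 1`, `A ⊆ X \ H` and `x ∈ H`. As `insert x A` separates points of `H`, it is not in
`F`, so by saturation it completes a chain of `k + 1` sets. Counting the sets below and above it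
shows that `A` contains a member of `𝒮 a` or its complement in `X \ H` contains a member of `𝒯 b`.
Choosing `A` at random with density `p` gives `1 ≤ |𝒮 a| p ^ a + |𝒯 b| (1 - p) ^ b`, and a suitable
`p` turns this into `|𝒮 a| + |𝒯 b| ≥ 2 ^ (2ab / (k - 1))`. Summing over `a + b = k - 1` bounds `|F|`
from below; about `√(2k)` of the terms are at least `2 ^ ((k - 1) / 2 - 1)`.
-/

section CanonDecomp

variable {α : Type*} [DecidableEq α] {G : Finset (Finset α)} {A : Finset α} {i : ℕ}

lemma mem_minimalsIn : A ∈ minimalsIn G ↔ Minimal (· ∈ G) A := by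
  simp only [minimalsIn, mem_filter, minimal_iff, eq_comm]

lemma minimalsIn_subset : minimalsIn G ⊆ G := filter_subset _ _

lemma mem_canonRest_succ :
    A ∈ canonRest G (i + 1) ↔ A ∈ canonRest G i ∧ ∃ B ∈ canonRest G i, B ⊂ A := by
  simp only [canonRest, mem_sdiff, mem_minimalsIn, and_congr_right_iff]
  intro hA
  simp only [not_minimal_iff_exists_lt hA, and_comm]

lemma canonRest_subset (i : ℕ) : canonRest G i ⊆ G := by
  induction i with
  | zero => exact Subset.rfl
  | succ i ih => exact sdiff_subset.trans ih

lemma canonDecomp_subset (i : ℕ) : canonDecomp G i ⊆ G :=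
  minimalsIn_subset.trans (canonRest_subset i)

lemma le_card_of_mem_canonRest (hA : A ∈ canonRest G i) : i ≤ #A := by
  induction i generalizing A with
  | zero => exact Nat.zero_le _
  | succ i ih =>
    obtain ⟨-, B, hB, hBA⟩ := mem_canonRest_succ.1 hA
    exact (ih hB).trans_lt (card_lt_card hBA)

lemma le_card_of_mem_canonDecomp (hA : A ∈ canonDecomp G i) : i ≤ #A :=
  le_card_of_mem_canonRest (minimalsIn_subset hA)

lemma card_canonRest_add_sum_card_canonDecomp (G : Finset (Finset α)) (N : ℕ) :
    #(canonRest G N) + ∑ i ∈ range N, #(canonDecomp G i) = #G := by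
  induction N with
  | zero => simp [canonRest]
  | succ N ih =>
    have hstrip : #(canonRest G (N + 1)) + #(canonDecomp G N) = #(canonRest G N) :=
      card_sdiff_add_card_eq_card minimalsIn_subset
    rw [sum_range_succ]
    omega

lemma sum_card_canonDecomp_le (G : Finset (Finset α)) (N : ℕ) :
    ∑ i ∈ range N, #(canonDecomp G i) ≤ #G :=
  le_of_add_le_right (card_canonRest_add_sum_card_canonDecomp G N).le

lemma sum_antidiagonal_card_canonDecomp_add_le (G₁ G₂ : Finset (Finset α)) (m : ℕ) :
    ∑ ab ∈ antidiagonal m, (#(canonDecomp G₁ ab.1) + #(canonDecomp G₂ ab.2)) ≤ #G₁ + #G₂ := by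
  calc ∑ ab ∈ antidiagonal m, (#(canonDecomp G₁ ab.1) + #(canonDecomp G₂ ab.2))
      = ∑ a ∈ range (m + 1), #(canonDecomp G₁ a) + ∑ b ∈ range (m + 1), #(canonDecomp G₂ b) := by
        rw [sum_add_distrib, Nat.sum_antidiagonal_eq_sum_range_succ_mk,
          ← Nat.sum_antidiagonal_swap, Nat.sum_antidiagonal_eq_sum_range_succ_mk]
        rfl
    _ ≤ #G₁ + #G₂ := add_le_add (sum_card_canonDecomp_le _ _) (sum_card_canonDecomp_le _ _)

lemma exists_mem_canonDecomp_subset (hA : A ∈ canonRest G i) :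
    ∃ B ∈ canonDecomp G i, B ⊆ A := by
  obtain ⟨B, hBA, hB⟩ := (canonRest G i).exists_le_minimal hA
  exact ⟨B, mem_minimalsIn.2 hB, hBA⟩

lemma mem_canonRest_succ_of_ssubset {B : Finset α} (hB : B ∈ canonRest G i) (hBA : B ⊂ A)
    (hA : A ∈ G) : A ∈ canonRest G (i + 1) := by
  induction i with
  | zero => exact mem_canonRest_succ.2 ⟨hA, B, hB, hBA⟩
  | succ i ih => exact mem_canonRest_succ.2 ⟨ih (mem_canonRest_succ.1 hB).1, B, hB, hBA⟩

lemma mem_canonRest_of_strictMono {N : ℕ} {C : Fin N → Finset α} (hC : StrictMono C) (j : Fin N)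
    (hG : ∀ i ≤ j, C i ∈ G) : C j ∈ canonRest G j := by
  obtain ⟨j, hj⟩ := j
  induction j with
  | zero => exact hG _ le_rfl
  | succ j ih =>
    have hlt : (⟨j, by omega⟩ : Fin N) < ⟨j + 1, hj⟩ := Fin.mk_lt_mk.2 j.lt_succ_self
    exact mem_canonRest_succ_of_ssubset (ih _ fun i hi => hG i (hi.trans hlt.le)) (hC hlt)
      (hG _ le_rfl)

end CanonDecomp

section Homogeneous

variable {α : Type*} [DecidableEq α] {X H S A : Finset α} {F : Finset (Finset α)}

/-- `H` is a homogeneous set for `F`: no member of `F` separates two points of `H`. Unlike a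
homogeneous atom, it need not be maximal. -/
def IsHomogSet (F : Finset (Finset α)) (H : Finset α) : Prop :=
  ∀ S ∈ F, S ∩ H = ∅ ∨ S ∩ H = H

/-- The complements in `X` of the large members of `F`. Taking complements makes the large sets
look like the small ones, so that the canonical decomposition from below serves for both. -/
def largeCompls (X : Finset α) (F : Finset (Finset α)) (H : Finset α) : Finset (Finset α) :=
  (largeSets F H).image (X \ ·)

lemma IsHomogSet.eq_empty_or_subset (hH : IsHomogSet F H) (hS : S ∈ F) : S ∩ H = ∅ ∨ H ⊆ S :=
  (hH S hS).imp_right inter_eq_right.1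

lemma isHomogSet_pair {x y : α} (h : ∀ S ∈ F, x ∈ S ↔ y ∈ S) : IsHomogSet F {x, y} := by
  intro S hS
  by_cases hx : x ∈ S
  · exact Or.inr (inter_eq_right.2 (by simp [insert_subset_iff, hx, (h S hS).1 hx]))
  · refine Or.inl (disjoint_iff_inter_eq_empty.1 ?_)
    simp [hx, mt (h S hS).2 hx]

lemma exists_isHomogSet_nontrivial (hX : 2 ^ #F < #X) :
    ∃ H ⊆ X, H.Nontrivial ∧ IsHomogSet F H := by
  rw [← card_powerset] at hX
  obtain ⟨x, hx, y, hy, hxy, htrace⟩ :=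
    exists_ne_map_eq_of_card_lt_of_maps_to hX (f := fun x => {S ∈ F | x ∈ S})
      fun x _ => mem_powerset.2 (filter_subset _ _)
  refine ⟨{x, y}, by simp [insert_subset_iff, hx, hy], ?_, isHomogSet_pair fun S hS => ?_⟩
  · rw [← one_lt_card_iff_nontrivial, card_pair hxy]
    norm_num
  · simpa [hS] using Finset.ext_iff.1 htrace S

lemma card_smallSets_add_card_largeSets_le (hH : H.Nonempty) :
    #(smallSets F H) + #(largeSets F H) ≤ #F := by
  have hdisj : Disjoint (smallSets F H) (largeSets F H) := by
    refine disjoint_filter.2 fun S _ hSH hHS => hH.ne_empty ?_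
    rwa [inter_eq_right.2 hHS] at hSH
  rw [← card_union_of_disjoint hdisj]
  exact card_le_card (union_subset (filter_subset _ _) (filter_subset _ _))

lemma card_smallSets_add_card_largeCompls_le (hH : H.Nonempty) :
    #(smallSets F H) + #(largeCompls X F H) ≤ #F :=
  (Nat.add_le_add_left card_image_le _).trans (card_smallSets_add_card_largeSets_le hH)

lemma subset_sdiff_of_mem_smallSets (hFX : ∀ S ∈ F, S ⊆ X) (hS : S ∈ smallSets F H) :
    S ⊆ X \ H := by
  rw [smallSets, mem_filter] at hS
  exact subset_sdiff.2 ⟨hFX S hS.1, disjoint_iff_inter_eq_empty.2 hS.2⟩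

lemma subset_sdiff_of_mem_largeCompls (hS : S ∈ largeCompls X F H) : S ⊆ X \ H := by
  obtain ⟨L, hL, rfl⟩ := mem_image.1 hS
  exact sdiff_subset_sdiff Subset.rfl (mem_filter.1 hL).2

lemma IsHomogSet.insert_notMem (hH : IsHomogSet F H) (hH₂ : H.Nontrivial) (hAH : Disjoint A H)
    {x : α} (hx : x ∈ H) : insert x A ∉ F := by
  intro hF
  obtain ⟨y, hy, hyx⟩ := hH₂.exists_ne x
  have hHA : H ⊆ insert x A := (hH.eq_empty_or_subset hF).resolve_left
    (nonempty_iff_ne_empty.1 ⟨x, mem_inter.2 ⟨mem_insert_self x A, hx⟩⟩)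
  exact disjoint_right.1 hAH hy (mem_of_mem_insert_of_ne (hHA hy) hyx)

lemma IsHomogSet.mem_smallSets_of_subset_insert (hH : IsHomogSet F H) (hH₂ : H.Nontrivial)
    (hAH : Disjoint A H) {x : α} (hS : S ∈ F) (hSA : S ⊆ insert x A) : S ∈ smallSets F H := by
  refine mem_filter.2 ⟨hS, (hH.eq_empty_or_subset hS).resolve_right fun hHS => ?_⟩
  obtain ⟨y, hy, hyx⟩ := hH₂.exists_ne x
  exact disjoint_right.1 hAH hy (mem_of_mem_insert_of_ne (hSA (hHS hy)) hyx)

lemma IsHomogSet.mem_largeSets_of_mem (hH : IsHomogSet F H) {x : α} (hx : x ∈ H) (hS : S ∈ F)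
    (hxS : x ∈ S) : S ∈ largeSets F H :=
  mem_filter.2 ⟨hS, (hH.eq_empty_or_subset hS).resolve_left
    (nonempty_iff_ne_empty.1 ⟨x, mem_inter.2 ⟨hxS, hx⟩⟩)⟩

end Homogeneous

section Saturation

variable {α : Type*} [DecidableEq α] {X T H A : Finset α} {F : Finset (Finset α)} {k a b : ℕ}

lemma IsSatKSperner.exists_chain_through (hF : IsSatKSperner X F k) (hTX : T ⊆ X) (hT : T ∉ F) :
    ∃ C : Fin (k + 1) → Finset α, StrictMono C ∧ (∀ j, C j ⊆ X) ∧
      ∃ i, C i = T ∧ ∀ j ≠ i, C j ∈ F := by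
  obtain ⟨C, hC, hCF⟩ := hF.2.2 T hTX hT
  obtain ⟨i, hi⟩ : ∃ i, C i = T := by
    by_contra! hne
    exact hF.2.1 ⟨C, hC, fun j => mem_of_mem_insert_of_ne (hCF j) (hne j)⟩
  refine ⟨C, hC, fun j => ?_, i, hi, fun j hj => mem_of_mem_insert_of_ne (hCF j) ?_⟩
  · exact (mem_insert.1 (hCF j)).elim (fun hjT => hjT ▸ hTX) (hF.1 _)
  · exact hi ▸ hC.injective.ne hj

lemma strictMono_sdiff_rev {N : ℕ} {C : Fin N → Finset α} (hC : StrictMono C)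
    (hCX : ∀ i, C i ⊆ X) : StrictMono fun i : Fin N => X \ C i.rev := by
  intro i j hij
  have hlt := hC (Fin.rev_lt_rev.2 hij)
  exact ⟨(sdiff_subset_sdiff_iff_subset (hCX _) (hCX _)).2 hlt.1,
    fun hji => hlt.2 ((sdiff_subset_sdiff_iff_subset (hCX _) (hCX _)).1 hji)⟩

-- Of the `a + b + 1` members of `F` in a chain through `insert x A` with `x ∈ H`, either more than
-- `a` lie below it and are small, or more than `b` lie above it and are large.
lemma IsSatKSperner.exists_canonDecomp_subset_or (hF : IsSatKSperner X F (a + b + 1))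
    (hH : IsHomogSet F H) (hHX : H ⊆ X) (hH₂ : H.Nontrivial) (hA : A ⊆ X \ H) :
    (∃ B ∈ canonDecomp (smallSets F H) a, B ⊆ A) ∨
      ∃ B ∈ canonDecomp (largeCompls X F H) b, B ⊆ (X \ H) \ A := by
  obtain ⟨hAX, hAH⟩ := subset_sdiff.1 hA
  obtain ⟨x, hx⟩ := hH₂.nonempty
  obtain ⟨C, hC, hCX, i, hi, hCF⟩ :=
    hF.exists_chain_through (insert_subset (hHX hx) hAX) (hH.insert_notMem hH₂ hAH hx)
  have hbelow {j} (hj : j < i) : C j ⊆ insert x A := hi ▸ (hC hj).subset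
  have habove {j} (hj : i < j) : insert x A ⊆ C j := hi ▸ (hC hj).subset
  rcases lt_or_ge a i.1 with hai | hia
  · have hsmall {j} (hj : j < i) : C j ∈ smallSets F H :=
      hH.mem_smallSets_of_subset_insert hH₂ hAH (hCF j hj.ne) (hbelow hj)
    let j : Fin (a + b + 1 + 1) := ⟨a, by omega⟩
    obtain ⟨B, hB, hBC⟩ := exists_mem_canonDecomp_subset
      (mem_canonRest_of_strictMono hC j fun l hl => hsmall (hl.trans_lt hai))
    have hxC : x ∉ C j := fun hxC =>
      (mem_sdiff.1 (subset_sdiff_of_mem_smallSets hF.1 (hsmall hai) hxC)).2 hx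
    exact Or.inl ⟨B, hB, hBC.trans ((subset_insert_iff_of_notMem hxC).1 (hbelow hai))⟩
  · have hlarge {j} (hj : i < j) : X \ C j ∈ largeCompls X F H :=
      mem_image_of_mem _ <| hH.mem_largeSets_of_mem hx (hCF j hj.ne')
        (habove hj (mem_insert_self x A))
    let j : Fin (a + b + 1 + 1) := ⟨b, by omega⟩
    have hrev {l} (hl : l ≤ j) : i < l.rev := by
      have : l.1 ≤ b := hl
      rw [Fin.lt_def, Fin.val_rev]
      omega
    obtain ⟨B, hB, hBC⟩ := exists_mem_canonDecomp_subset
      (mem_canonRest_of_strictMono (strictMono_sdiff_rev hC hCX) j fun l hl => hlarge (hrev hl))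
    refine Or.inr ⟨B, hB, hBC.trans (subset_sdiff.2 ⟨?_, ?_⟩)⟩
    · exact subset_sdiff_of_mem_largeCompls (hlarge (hrev le_rfl))
    · exact sdiff_disjoint.mono_right ((subset_insert x A).trans (habove (hrev le_rfl)))

end Saturation

section SubsetWeight

lemma sum_biUnion_le_sum_sum {ι κ M : Type*} [DecidableEq κ] [AddCommMonoid M]
    [PartialOrder M] [IsOrderedAddMonoid M] (s : Finset ι) (t : ι → Finset κ) {f : κ → M}
    (hf : ∀ x, 0 ≤ f x) : ∑ x ∈ s.biUnion t, f x ≤ ∑ i ∈ s, ∑ x ∈ t i, f x := by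
  classical
  induction s using Finset.induction_on with
  | empty => simp
  | insert i s hi ih =>
    rw [biUnion_insert, sum_insert hi]
    calc ∑ x ∈ t i ∪ s.biUnion t, f x
        ≤ ∑ x ∈ t i ∪ s.biUnion t, f x + ∑ x ∈ t i ∩ s.biUnion t, f x :=
          le_add_of_nonneg_right (sum_nonneg fun x _ => hf x)
      _ = ∑ x ∈ t i, f x + ∑ x ∈ s.biUnion t, f x := sum_union_inter
      _ ≤ ∑ x ∈ t i, f x + ∑ j ∈ s, ∑ x ∈ t j, f x := by gcongr

variable {α R : Type*} [DecidableEq α] {Y A B : Finset α}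

/-- For `p + q = 1`, the probability that a random subset of `Y`, containing each point
independently with probability `p`, equals `A`. -/
def subsetWeight [CommSemiring R] (p q : R) (Y A : Finset α) : R :=
  p ^ #A * q ^ #(Y \ A)

variable [CommSemiring R] {p q : R}

lemma sum_subsetWeight_powerset (hpq : p + q = 1) (Y : Finset α) :
    ∑ A ∈ Y.powerset, subsetWeight p q Y A = 1 := by
  have h := prod_add (fun _ => p) (fun _ => q) Y
  simp only [prod_const, hpq, one_pow] at h
  exact h.symm

lemma subsetWeight_sdiff (hA : A ⊆ Y) : subsetWeight p q Y (Y \ A) = subsetWeight q p Y A := by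
  rw [subsetWeight, subsetWeight, Finset.sdiff_sdiff_eq_self hA, mul_comm]

lemma sum_subsetWeight_Icc (hpq : p + q = 1) (hB : B ⊆ Y) :
    ∑ A ∈ Icc B Y, subsetWeight p q Y A = p ^ #B := by
  have hdisj : ∀ A ∈ (Y \ B).powerset, Disjoint B A := fun A hA =>
    (subset_sdiff.1 (mem_powerset.1 hA)).2.symm
  have hinj : Set.InjOn (B ∪ ·) ((Y \ B).powerset : Set (Finset α)) := by
    intro A hA A' hA' h
    rw [← union_sdiff_cancel_left (hdisj A hA), ← union_sdiff_cancel_left (hdisj A' hA')]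
    exact congrArg (· \ B) h
  have hfactor : ∀ A ∈ (Y \ B).powerset,
      subsetWeight p q Y (B ∪ A) = p ^ #B * subsetWeight p q (Y \ B) A := by
    intro A hA
    rw [subsetWeight, subsetWeight, card_union_of_disjoint (hdisj A hA), pow_add, mul_assoc,
      sdiff_sdiff_left]
    rfl
  rw [Icc_eq_image_powerset hB, sum_image hinj, sum_congr rfl hfactor, ← mul_sum,
    sum_subsetWeight_powerset hpq, mul_one]

lemma sum_subsetWeight_filter_sdiff (P : Finset α → Prop) [DecidablePred P] :
    ∑ A ∈ Y.powerset with P (Y \ A), subsetWeight p q Y A =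
      ∑ A ∈ Y.powerset with P A, subsetWeight q p Y A := by
  have hinv {A : Finset α} (hA : A ∈ Y.powerset) : Y \ (Y \ A) = A :=
    Finset.sdiff_sdiff_eq_self (mem_powerset.1 hA)
  refine sum_bij' (fun A _ => Y \ A) (fun A _ => Y \ A) ?_ ?_ ?_ ?_ ?_
  · exact fun A hA => mem_filter.2 ⟨mem_powerset.2 sdiff_subset, (mem_filter.1 hA).2⟩
  · intro A hA
    obtain ⟨hAY, hPA⟩ := mem_filter.1 hA
    exact mem_filter.2 ⟨mem_powerset.2 sdiff_subset, (hinv hAY).symm ▸ hPA⟩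
  · exact fun A hA => hinv (mem_filter.1 hA).1
  · exact fun A hA => hinv (mem_filter.1 hA).1
  · exact fun A hA => (subsetWeight_sdiff (mem_powerset.1 (mem_filter.1 hA).1)).symm

variable [PartialOrder R] [IsOrderedRing R]

lemma subsetWeight_nonneg (hp : 0 ≤ p) (hq : 0 ≤ q) : 0 ≤ subsetWeight p q Y A :=
  mul_nonneg (pow_nonneg hp _) (pow_nonneg hq _)

lemma sum_subsetWeight_exists_subset_le (hp : 0 ≤ p) (hq : 0 ≤ q) (hpq : p + q = 1)
    {P : Finset (Finset α)} {a : ℕ} (hP : ∀ B ∈ P, B ⊆ Y ∧ a ≤ #B) :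
    ∑ A ∈ Y.powerset with ∃ B ∈ P, B ⊆ A, subsetWeight p q Y A ≤ #P * p ^ a := by
  have hp₁ : p ≤ 1 := hpq ▸ le_add_of_nonneg_right hq
  have hcover : {A ∈ Y.powerset | ∃ B ∈ P, B ⊆ A} = P.biUnion (Icc · Y) := by
    ext A
    simp only [mem_filter, mem_powerset, mem_biUnion, mem_Icc]
    tauto
  calc ∑ A ∈ Y.powerset with ∃ B ∈ P, B ⊆ A, subsetWeight p q Y A
      ≤ ∑ B ∈ P, ∑ A ∈ Icc B Y, subsetWeight p q Y A :=
        hcover ▸ sum_biUnion_le_sum_sum _ _ fun _ => subsetWeight_nonneg hp hq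
    _ = ∑ B ∈ P, p ^ #B := sum_congr rfl fun B hB => sum_subsetWeight_Icc hpq (hP B hB).1
    _ ≤ #P • p ^ a := sum_le_card_nsmul _ _ _ fun B hB => pow_le_pow_of_le_one hp hp₁ (hP B hB).2
    _ = #P * p ^ a := nsmul_eq_mul _ _

-- A random subset of `Y` contains a given member of `P` with probability at most `p ^ a`, and
-- avoids a given member of `Q` with probability at most `q ^ b`.
lemma one_le_card_mul_pow_add_card_mul_pow (hp : 0 ≤ p) (hq : 0 ≤ q) (hpq : p + q = 1)
    {P Q : Finset (Finset α)} {a b : ℕ} (hP : ∀ B ∈ P, B ⊆ Y ∧ a ≤ #B)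
    (hQ : ∀ B ∈ Q, B ⊆ Y ∧ b ≤ #B)
    (hcover : ∀ A ⊆ Y, (∃ B ∈ P, B ⊆ A) ∨ ∃ B ∈ Q, B ⊆ Y \ A) :
    1 ≤ #P * p ^ a + #Q * q ^ b := by
  have hsub : {A ∈ Y.powerset | ¬∃ B ∈ P, B ⊆ A} ⊆ {A ∈ Y.powerset | ∃ B ∈ Q, B ⊆ Y \ A} :=
    fun A hA => mem_filter.2 ⟨filter_subset _ _ hA,
      (hcover A (mem_powerset.1 (mem_filter.1 hA).1)).resolve_left (mem_filter.1 hA).2⟩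
  calc (1 : R) = ∑ A ∈ Y.powerset, subsetWeight p q Y A := (sum_subsetWeight_powerset hpq Y).symm
    _ = ∑ A ∈ Y.powerset with ∃ B ∈ P, B ⊆ A, subsetWeight p q Y A +
          ∑ A ∈ Y.powerset with ¬∃ B ∈ P, B ⊆ A, subsetWeight p q Y A :=
        (sum_filter_add_sum_filter_not _ _ _).symm
    _ ≤ ∑ A ∈ Y.powerset with ∃ B ∈ P, B ⊆ A, subsetWeight p q Y A +
          ∑ A ∈ Y.powerset with ∃ B ∈ Q, B ⊆ Y \ A, subsetWeight p q Y A := by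
        gcongr
        exact fun _ _ _ => subsetWeight_nonneg hp hq
    _ = ∑ A ∈ Y.powerset with ∃ B ∈ P, B ⊆ A, subsetWeight p q Y A +
          ∑ A ∈ Y.powerset with ∃ B ∈ Q, B ⊆ A, subsetWeight q p Y A := by
        rw [sum_subsetWeight_filter_sdiff fun A => ∃ B ∈ Q, B ⊆ A]
    _ ≤ #P * p ^ a + #Q * q ^ b :=
        add_le_add (sum_subsetWeight_exists_subset_le hp hq hpq hP)
          (sum_subsetWeight_exists_subset_le hq hp (add_comm p q ▸ hpq) hQ)

end SubsetWeight

section Optimization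

lemma one_le_two_rpow_add_two_rpow {x y : ℝ} (hxy : x + y = -2) :
    1 ≤ (2 : ℝ) ^ x + (2 : ℝ) ^ y := by
  have hmul : (2 : ℝ) ^ x * (2 : ℝ) ^ y = 1 / 4 := by
    rw [← Real.rpow_add two_pos, hxy]
    norm_num
  nlinarith [sq_nonneg ((2 : ℝ) ^ x - 2 ^ y), Real.rpow_pos_of_pos two_pos x,
    Real.rpow_pos_of_pos two_pos y]

-- Take `p = 2 ^ (-2b / (a + b))`; then `1 - p ≤ 2 ^ (-2a / (a + b))` by AM-GM, which makes both
-- powers at most `2 ^ (-2ab / (a + b))`.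
lemma two_rpow_le_add_of_forall {s l : ℝ} (hl : 0 ≤ l) {a b : ℕ}
    (h : ∀ p q : ℝ, 0 ≤ p → 0 ≤ q → p + q = 1 → 1 ≤ s * p ^ a + l * q ^ b) :
    (2 : ℝ) ^ (2 * a * b / (a + b) : ℝ) ≤ s + l := by
  rcases eq_or_ne ((a : ℝ) + b) 0 with hab | hab
  · have hab' : a = 0 ∧ b = 0 := by norm_cast at hab; omega
    simpa [hab'.1, hab'.2] using h 1 0 one_pos.le le_rfl (add_zero 1)
  set e : ℝ := 2 * a * b / (a + b) with he
  set p : ℝ := 2 ^ (-(2 * b / (a + b)) : ℝ) with hp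
  set r : ℝ := 2 ^ (-(2 * a / (a + b)) : ℝ) with hr
  have hp₀ : 0 < p := by positivity
  have hp₁ : p ≤ 1 :=
    Real.rpow_le_one_of_one_le_of_nonpos one_le_two (neg_nonpos.2 (by positivity))
  have hpr : 1 ≤ p + r := one_le_two_rpow_add_two_rpow (by field_simp; ring)
  have hpa : p ^ a = 2 ^ (-e) := by
    rw [hp, ← Real.rpow_mul_natCast two_pos.le, he]
    ring_nf
  have hrb : r ^ b = 2 ^ (-e) := by
    rw [hr, ← Real.rpow_mul_natCast two_pos.le, he]
    ring_nf
  have hone : 1 ≤ (s + l) * 2 ^ (-e) := by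
    calc 1 ≤ s * p ^ a + l * (1 - p) ^ b := h p (1 - p) hp₀.le (by linarith) (by ring)
      _ ≤ s * p ^ a + l * r ^ b := by
        gcongr
        linarith
      _ = (s + l) * 2 ^ (-e) := by rw [hpa, hrb, add_mul]
  rwa [Real.rpow_neg two_pos.le, ← div_eq_mul_inv, one_le_div (by positivity)] at hone

end Optimization

section NearDiagonal

/-- The pairs `(a, b)` with `a + b = m` and `|a - b| ≤ √(2m)`, for which `2ab / m` is within `1` of
its maximum `m / 2`. -/
def nearDiagonal (m : ℕ) : Finset (ℕ × ℕ) :=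
  {ab ∈ antidiagonal m | ((ab.1 : ℤ) - ab.2) ^ 2 ≤ 2 * m}

lemma half_sub_one_le_of_mem_nearDiagonal {m : ℕ} {ab : ℕ × ℕ} (h : ab ∈ nearDiagonal m) :
    (m : ℝ) / 2 - 1 ≤ 2 * ab.1 * ab.2 / (ab.1 + ab.2) := by
  obtain ⟨hsum, hsq⟩ := mem_filter.1 h
  have hm : (ab.1 : ℝ) + ab.2 = m := by exact_mod_cast mem_antidiagonal.1 hsum
  have hsq' : ((ab.1 : ℝ) - ab.2) ^ 2 ≤ 2 * m := by exact_mod_cast hsq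
  rw [hm]
  rcases m.eq_zero_or_pos with rfl | hpos
  · norm_num
  · rw [le_div_iff₀ (by exact_mod_cast hpos)]
    nlinarith

lemma sqrt_le_card_nearDiagonal (m : ℕ) : Nat.sqrt (2 * m) ≤ #(nearDiagonal m) := by
  set s := Nat.sqrt (2 * m)
  have hs₂ : s * s ≤ 2 * m := Nat.sqrt_le _
  have hsm : s ≤ m := by by_contra! hlt; nlinarith
  have hmaps : ∀ a ∈ Icc ((m - s + 1) / 2) ((m + s) / 2), (a, m - a) ∈ nearDiagonal m := by
    intro a ha
    obtain ⟨hlo, hhi⟩ := mem_Icc.1 ha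
    have ham : a ≤ m := by omega
    refine mem_filter.2 ⟨mem_antidiagonal.2 (Nat.add_sub_cancel' ham), ?_⟩
    have hdist : ((a : ℤ) - (m - a : ℕ)) ^ 2 ≤ (s : ℤ) ^ 2 := by
      apply sq_le_sq'
      · omega
      · omega
    nlinarith
  calc s ≤ #(Icc ((m - s + 1) / 2) ((m + s) / 2)) := by rw [Nat.card_Icc]; omega
    _ ≤ #(nearDiagonal m) :=
      card_le_card_of_injOn (fun a => (a, m - a)) hmaps fun _ _ _ _ h => congrArg Prod.fst h

lemma le_card_nearDiagonal_sq (m : ℕ) : 81 * (m + 1) ≤ 100 * #(nearDiagonal m) ^ 2 := by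
  rcases lt_or_ge m 5 with hm | hm
  · interval_cases m <;> decide
  · have hcard := sqrt_le_card_nearDiagonal m
    have hsqrt : 3 ≤ Nat.sqrt (2 * m) := Nat.le_sqrt.2 (by omega)
    have hlt : 2 * m < (Nat.sqrt (2 * m) + 1) * (Nat.sqrt (2 * m) + 1) := Nat.lt_succ_sqrt _
    nlinarith

lemma mul_sqrt_le_card_nearDiagonal (m : ℕ) : 0.9 * √(m + 1) ≤ #(nearDiagonal m) := by
  have h : (81 * (m + 1) : ℝ) ≤ 100 * #(nearDiagonal m) ^ 2 := by
    exact_mod_cast le_card_nearDiagonal_sq m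
  refine le_of_pow_le_pow_left₀ two_ne_zero (Nat.cast_nonneg _) ?_
  rw [mul_pow, Real.sq_sqrt (by positivity)]
  linarith

end NearDiagonal

section Exponent

lemma two_rpow_neg_sixteen_hundredths_le : (2 : ℝ) ^ (-0.16 : ℝ) ≤ 0.9 := by
  have hpow : ((2 : ℝ) ^ (-0.16 : ℝ)) ^ 25 ≤ 0.9 ^ 25 := by
    rw [← Real.rpow_mul_natCast two_pos.le,
      show (-0.16 : ℝ) * (25 : ℕ) = (-4 : ℤ) by norm_num, Real.rpow_intCast]
    norm_num
  exact le_of_pow_le_pow_left₀ (by norm_num) (by norm_num) hpow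

lemma two_rpow_half_add_logb_eq (m : ℕ) :
    (2 : ℝ) ^ (((m + 1 : ℕ) : ℝ) / 2 + (1 / 2) * Real.logb 2 (m + 1 : ℕ) - 1.66) =
      2 ^ (-0.16 : ℝ) * √(m + 1) * 2 ^ ((m : ℝ) / 2 - 1) := by
  have hsqrt : √((m : ℝ) + 1) = 2 ^ (Real.logb 2 (m + 1) * (1 / 2)) := by
    rw [Real.rpow_mul two_pos.le, Real.rpow_logb two_pos (by norm_num) (by positivity),
      Real.sqrt_eq_rpow]
  rw [hsqrt, ← Real.rpow_add two_pos, ← Real.rpow_add two_pos]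
  push_cast
  ring_nf

lemma two_rpow_half_add_logb_le_card_nearDiagonal_mul (m : ℕ) :
    (2 : ℝ) ^ (((m + 1 : ℕ) : ℝ) / 2 + (1 / 2) * Real.logb 2 (m + 1 : ℕ) - 1.66) ≤
      #(nearDiagonal m) * 2 ^ ((m : ℝ) / 2 - 1) := by
  rw [two_rpow_half_add_logb_eq]
  gcongr
  exact (mul_le_mul_of_nonneg_right two_rpow_neg_sixteen_hundredths_le (Real.sqrt_nonneg _)).trans
    (mul_sqrt_le_card_nearDiagonal m)

lemma two_rpow_half_add_logb_le_two_pow (m : ℕ) :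
    (2 : ℝ) ^ (((m + 1 : ℕ) : ℝ) / 2 + (1 / 2) * Real.logb 2 (m + 1 : ℕ) - 1.66) ≤ 2 ^ m := by
  have hlog : Real.logb 2 (m + 1 : ℕ) ≤ m := by
    rw [Real.logb_le_iff_le_rpow one_lt_two (by positivity), Real.rpow_natCast]
    exact_mod_cast Nat.lt_two_pow_self
  rw [← Real.rpow_natCast 2 m]
  refine Real.rpow_le_rpow_of_exponent_le one_le_two ?_
  push_cast at hlog ⊢
  linarith

end Exponent

section LowerBound

variable {α : Type*} [DecidableEq α] {X H : Finset α} {F : Finset (Finset α)}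

lemma IsSatKSperner.two_rpow_le_card_canonDecomp_add {a b : ℕ}
    (hF : IsSatKSperner X F (a + b + 1)) (hH : IsHomogSet F H) (hHX : H ⊆ X)
    (hH₂ : H.Nontrivial) :
    (2 : ℝ) ^ (2 * a * b / (a + b) : ℝ) ≤
      #(canonDecomp (smallSets F H) a) + #(canonDecomp (largeCompls X F H) b) := by
  refine two_rpow_le_add_of_forall (Nat.cast_nonneg _) fun p q hp hq hpq =>
    one_le_card_mul_pow_add_card_mul_pow hp hq hpq (Y := X \ H) (fun B hB => ⟨?_, ?_⟩)
      (fun B hB => ⟨?_, ?_⟩) fun A hA => hF.exists_canonDecomp_subset_or hH hHX hH₂ hA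
  · exact subset_sdiff_of_mem_smallSets hF.1 (canonDecomp_subset a hB)
  · exact le_card_of_mem_canonDecomp hB
  · exact subset_sdiff_of_mem_largeCompls (canonDecomp_subset b hB)
  · exact le_card_of_mem_canonDecomp hB

theorem IsSatKSperner.sum_antidiagonal_two_rpow_le_card {m : ℕ}
    (hF : IsSatKSperner X F (m + 1)) (hH : IsHomogSet F H) (hHX : H ⊆ X) (hH₂ : H.Nontrivial) :
    ∑ ab ∈ antidiagonal m, (2 : ℝ) ^ (2 * ab.1 * ab.2 / (ab.1 + ab.2) : ℝ) ≤ #F := by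
  calc _ ≤ ∑ ab ∈ antidiagonal m, ((#(canonDecomp (smallSets F H) ab.1) : ℝ) +
        #(canonDecomp (largeCompls X F H) ab.2)) := by
        refine sum_le_sum fun ab hab => ?_
        rw [← mem_antidiagonal.1 hab] at hF
        exact hF.two_rpow_le_card_canonDecomp_add hH hHX hH₂
    _ ≤ #F := by
        exact_mod_cast (sum_antidiagonal_card_canonDecomp_add_le _ _ m).trans
          (card_smallSets_add_card_largeCompls_le hH₂.nonempty)

lemma card_nearDiagonal_mul_le_sum_antidiagonal (m : ℕ) :
    #(nearDiagonal m) * (2 : ℝ) ^ ((m : ℝ) / 2 - 1) ≤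
      ∑ ab ∈ antidiagonal m, (2 : ℝ) ^ (2 * ab.1 * ab.2 / (ab.1 + ab.2) : ℝ) := by
  calc #(nearDiagonal m) * (2 : ℝ) ^ ((m : ℝ) / 2 - 1)
      = #(nearDiagonal m) • (2 : ℝ) ^ ((m : ℝ) / 2 - 1) := (nsmul_eq_mul _ _).symm
    _ ≤ ∑ ab ∈ nearDiagonal m, (2 : ℝ) ^ (2 * ab.1 * ab.2 / (ab.1 + ab.2) : ℝ) :=
        card_nsmul_le_sum _ _ _ fun _ hab =>
          Real.rpow_le_rpow_of_exponent_le one_le_two (half_sub_one_le_of_mem_nearDiagonal hab)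
    _ ≤ _ := sum_le_sum_of_subset_of_nonneg (filter_subset _ _) fun _ _ _ => by positivity

theorem lower_bound_166_general {k : ℕ} (hk : 1 ≤ k) (hX : 2 ^ 2 ^ (k - 1) < #X)
    (hF : IsSatKSperner X F k) :
    (2 : ℝ) ^ ((k : ℝ) / 2 + (1 / 2) * Real.logb 2 k - 1.66) ≤ #F := by
  obtain ⟨m, rfl⟩ := Nat.exists_eq_add_of_le' hk
  rw [Nat.add_sub_cancel] at hX
  rcases le_total #F (2 ^ m) with hsmall | hlarge
  · obtain ⟨H, hHX, hH₂, hH⟩ : ∃ H ⊆ X, H.Nontrivial ∧ IsHomogSet F H :=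
      exists_isHomogSet_nontrivial ((Nat.pow_le_pow_right two_pos hsmall).trans_lt hX)
    calc _ ≤ #(nearDiagonal m) * (2 : ℝ) ^ ((m : ℝ) / 2 - 1) :=
          two_rpow_half_add_logb_le_card_nearDiagonal_mul m
      _ ≤ _ := card_nearDiagonal_mul_le_sum_antidiagonal m
      _ ≤ #F := hF.sum_antidiagonal_two_rpow_le_card hH hHX hH₂
  · exact (two_rpow_half_add_logb_le_two_pow m).trans (by exact_mod_cast hlarge)

end LowerBound

theorem lower_bound_166 (k n : ℕ) (hk : 7 ≤ k) (hn : 2 ^ 2 ^ (k - 1) < n)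
    (F : Finset (Finset ℕ)) (hF : IsSatKSperner (Finset.Icc 1 n) F k) :
    (2 : ℝ) ^ ((k : ℝ) / 2 + (1 / 2) * Real.logb 2 k - 1.66) ≤ F.card :=
  lower_bound_166_general (le_trans (by norm_num) hk) (by simpa using hn) hF
end

section
/- For every integer k ≥ 6 there exists n₀ such that for every n ≥ n₀ there is a saturated k-Sperner system F ⊆ P([n]) with |F| ≤ 2^{(1−ε)k}, where ε = 1 − (log₂ 15)/4 (equivalently, |F| ≤ 15^{k/4}). -/
open Finset

/-!
Suppose `P(β)` carries a monotone rank function with values `0, …, t` such that one can descend and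
ascend from every set without skipping a value. Take the sets that are minimal within their level
and, with a fixed nonempty block of new points added, the sets that are maximal within their level.
The rank is strictly monotone on either kind, so counting the block as one extra rank shows that
chains have at most `t + 2` members. A set outside the family lies between a chain of minimal sets
of all ranks up to its own and a chain of maximal sets of all ranks from its own on, which gives
saturation. Rank functions add along disjoint unions of ground sets while the numbers of
level-minimal and level-maximal sets multiply, so the bound comes from a single rank function on
the subsets of six points: it has `t = 4` with `15` minimal and `15` maximal sets, against the
`2 ^ 4` coming from cardinality on four points.
-/

section Rank

variable {P Q R : Type*}

/-- The elements of `P` that are minimal within their level of the rank function `h`, for `h`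
monotone. -/
def levelMinimals [Preorder P] [Preorder R] (h : P → R) : Set P :=
  {a | ∀ b < a, h b < h a}

/-- The elements of `P` that are maximal within their level of the rank function `h`, for `h`
monotone. -/
def levelMaximals [Preorder P] [Preorder R] (h : P → R) : Set P :=
  {a | ∀ b > a, h a < h b}

theorem exists_mem_levelMinimals_le [Preorder P] [WellFoundedLT P] [PartialOrder R] {h : P → R}
    (hh : Monotone h) (a : P) : ∃ b ∈ levelMinimals h, b ≤ a ∧ h b = h a := by
  obtain ⟨b, hba, hb⟩ := exists_minimal_le_of_wellFoundedLT (fun b => h b = h a) a rfl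
  refine ⟨b, fun c hcb => (hh hcb.le).lt_of_ne fun hc => ?_, hba, hb.prop⟩
  exact hb.not_prop_of_lt hcb (hc.trans hb.prop)

theorem exists_mem_levelMaximals_ge [Preorder P] [WellFoundedGT P] [PartialOrder R] {h : P → R}
    (hh : Monotone h) (a : P) : ∃ b ∈ levelMaximals h, a ≤ b ∧ h b = h a :=
  exists_mem_levelMinimals_le (P := Pᵒᵈ) (R := Rᵒᵈ) hh.dual a

theorem levelMinimals_eq_univ [Preorder P] [Preorder R] {h : P → R}
    (hh : StrictMono h) : levelMinimals h = Set.univ :=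
  Set.eq_univ_of_forall fun _ _ hlt => hh hlt

theorem levelMaximals_eq_univ [Preorder P] [Preorder R] {h : P → R}
    (hh : StrictMono h) : levelMaximals h = Set.univ :=
  Set.eq_univ_of_forall fun _ _ hlt => hh hlt

theorem levelMinimals_comp_orderIso [Preorder P] [Preorder Q] [Preorder R] (h : Q → R)
    (e : P ≃o Q) : levelMinimals (h ∘ e) = e ⁻¹' levelMinimals h := by
  ext a
  simp only [levelMinimals, Set.mem_ofPred_eq, Set.mem_preimage, e.surjective.forall,
    Function.comp_apply, e.lt_iff_lt]

theorem levelMaximals_comp_orderIso [Preorder P] [Preorder Q] [Preorder R] (h : Q → R)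
    (e : P ≃o Q) : levelMaximals (h ∘ e) = e ⁻¹' levelMaximals h :=
  levelMinimals_comp_orderIso (P := Pᵒᵈ) (Q := Qᵒᵈ) (R := Rᵒᵈ) h e.dual

theorem levelMinimals_prod_add [Preorder P] [Preorder Q] [AddCommMonoid R] [PartialOrder R]
    [IsOrderedCancelAddMonoid R] {h : P → R} {g : Q → R} (hh : Monotone h) (hg : Monotone g) :
    levelMinimals (fun x : P × Q => h x.1 + g x.2) = levelMinimals h ×ˢ levelMinimals g := by
  ext ⟨a, b⟩
  refine ⟨fun hab => ⟨fun c hc => ?_, fun d hd => ?_⟩, fun ⟨ha, hb⟩ ⟨c, d⟩ hlt => ?_⟩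
  · exact lt_of_add_lt_add_right (hab (c, b) (Prod.mk_lt_mk_iff_left.2 hc))
  · exact lt_of_add_lt_add_left (hab (a, d) (Prod.mk_lt_mk_iff_right.2 hd))
  · rcases Prod.mk_lt_mk.1 hlt with ⟨hc, hd⟩ | ⟨hc, hd⟩
    · exact add_lt_add_of_lt_of_le (ha c hc) (hg hd)
    · exact add_lt_add_of_le_of_lt (hh hc) (hb d hd)

theorem levelMaximals_prod_add [Preorder P] [Preorder Q] [AddCommMonoid R] [PartialOrder R]
    [IsOrderedCancelAddMonoid R] {h : P → R} {g : Q → R} (hh : Monotone h) (hg : Monotone g) :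
    levelMaximals (fun x : P × Q => h x.1 + g x.2) = levelMaximals h ×ˢ levelMaximals g :=
  levelMinimals_prod_add (R := Rᵒᵈ) hh.dual hg.dual

/-- A rank function of height `t`: a monotone map to `{0, …, t}` such that from every element one
can descend through all smaller values and ascend through all larger ones. -/
structure IsGaplessRank [Preorder P] (h : P → ℕ) (t : ℕ) : Prop where
  monotone : Monotone h
  le_height (a : P) : h a ≤ t
  exists_le_add_one_eq (a : P) : 0 < h a → ∃ b ≤ a, h b + 1 = h a
  exists_ge_eq_add_one (a : P) : h a < t → ∃ b ≥ a, h b = h a + 1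

namespace IsGaplessRank

theorem comp_orderIso [Preorder P] [Preorder Q] {h : Q → ℕ} {t : ℕ} (hh : IsGaplessRank h t)
    (e : P ≃o Q) : IsGaplessRank (h ∘ e) t where
  monotone := hh.monotone.comp e.monotone
  le_height a := hh.le_height (e a)
  exists_le_add_one_eq a ha := by
    obtain ⟨b, hba, hb⟩ := hh.exists_le_add_one_eq (e a) ha
    exact ⟨e.symm b, e.symm_apply_le.2 hba, by simpa using hb⟩
  exists_ge_eq_add_one a ha := by
    obtain ⟨b, hab, hb⟩ := hh.exists_ge_eq_add_one (e a) ha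
    exact ⟨e.symm b, e.le_symm_apply.2 hab, by simpa using hb⟩

theorem prod_add [Preorder P] [Preorder Q] {h : P → ℕ} {g : Q → ℕ} {t u : ℕ}
    (hh : IsGaplessRank h t) (hg : IsGaplessRank g u) :
    IsGaplessRank (fun x : P × Q => h x.1 + g x.2) (t + u) where
  monotone _ _ hxy := add_le_add (hh.monotone hxy.1) (hg.monotone hxy.2)
  le_height x := add_le_add (hh.le_height x.1) (hg.le_height x.2)
  exists_le_add_one_eq := by
    rintro ⟨a, b⟩ hab
    rcases Nat.add_pos_iff_pos_or_pos.1 hab with ha | hb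
    · obtain ⟨c, hca, hc⟩ := hh.exists_le_add_one_eq a ha
      exact ⟨(c, b), ⟨hca, le_rfl⟩, by dsimp only; omega⟩
    · obtain ⟨d, hdb, hd⟩ := hg.exists_le_add_one_eq b hb
      exact ⟨(a, d), ⟨le_rfl, hdb⟩, by dsimp only; omega⟩
  exists_ge_eq_add_one := by
    rintro ⟨a, b⟩ hab
    rcases lt_or_lt_of_add_lt_add hab with ha | hb
    · obtain ⟨c, hac, hc⟩ := hh.exists_ge_eq_add_one a ha
      exact ⟨(c, b), ⟨hac, le_rfl⟩, by dsimp only; omega⟩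
    · obtain ⟨d, hbd, hd⟩ := hg.exists_ge_eq_add_one b hb
      exact ⟨(a, d), ⟨le_rfl, hbd⟩, by dsimp only; omega⟩

theorem card (β : Type*) [Fintype β] :
    IsGaplessRank (Finset.card : Finset β → ℕ) (Fintype.card β) where
  monotone := Finset.card_mono
  le_height := Finset.card_le_univ
  exists_le_add_one_eq A hA := by
    obtain ⟨B, hBA, hB⟩ := Finset.exists_subset_card_eq (Nat.sub_le #A 1)
    exact ⟨B, hBA, by omega⟩
  exists_ge_eq_add_one A hA := by
    obtain ⟨B, hAB, hB⟩ := Finset.exists_superset_card_eq (Nat.le_succ #A) hA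
    exact ⟨B, hAB, hB⟩

theorem exists_ltSeries_levelMinimals [PartialOrder P] [WellFoundedLT P] {h : P → ℕ} {t : ℕ}
    (hh : IsGaplessRank h t) (a : P) :
    ∃ p : LTSeries (levelMinimals h), p.length = h a ∧ (p.last : P) ≤ a := by
  induction hn : h a generalizing a with
  | zero =>
    obtain ⟨b, hb, hba, -⟩ := exists_mem_levelMinimals_le hh.monotone a
    exact ⟨RelSeries.singleton _ ⟨b, hb⟩, rfl, hba⟩
  | succ n ih =>
    obtain ⟨b, hb, hba, hrank⟩ := exists_mem_levelMinimals_le hh.monotone a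
    obtain ⟨c, hcb, hc⟩ := hh.exists_le_add_one_eq b (by omega)
    have hlt : c < b := hcb.lt_of_ne fun heq => by subst heq; omega
    obtain ⟨p, hp, hpc⟩ := ih c (by omega)
    exact ⟨p.snoc ⟨b, hb⟩ (hpc.trans_lt hlt), by simp [hp], by simpa using hba⟩

theorem exists_ltSeries_levelMaximals [PartialOrder P] [WellFoundedGT P] {h : P → ℕ} {t : ℕ}
    (hh : IsGaplessRank h t) (a : P) :
    ∃ p : LTSeries (levelMaximals h), p.length = t - h a ∧ a ≤ (p.head : P) := by
  induction hn : t - h a generalizing a with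
  | zero =>
    obtain ⟨b, hb, hab, -⟩ := exists_mem_levelMaximals_ge hh.monotone a
    exact ⟨RelSeries.singleton _ ⟨b, hb⟩, rfl, hab⟩
  | succ n ih =>
    obtain ⟨b, hb, hab, hrank⟩ := exists_mem_levelMaximals_ge hh.monotone a
    obtain ⟨c, hbc, hc⟩ := hh.exists_ge_eq_add_one b (by omega)
    have hlt : b < c := lt_of_le_of_ne hbc fun heq => by subst heq; omega
    obtain ⟨p, hp, hcp⟩ := ih c (by omega)
    exact ⟨p.cons ⟨b, hb⟩ (hlt.trans_le hcp), by simp [hp], by simpa using hab⟩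

end IsGaplessRank

end Rank

section BalancedRank

/-- Some finite Boolean lattice has a rank function of height `t` with exactly `s` level-minimal
and exactly `s` level-maximal sets. -/
def HasBalancedRank (t s : ℕ) : Prop :=
  ∃ (β : Type) (_ : Fintype β) (h : Finset β → ℕ),
    IsGaplessRank h t ∧ (levelMinimals h).ncard = s ∧ (levelMaximals h).ncard = s

theorem HasBalancedRank.add {t s u r : ℕ} (h₁ : HasBalancedRank t s) (h₂ : HasBalancedRank u r) :
    HasBalancedRank (t + u) (s * r) := by
  obtain ⟨β, _, h, hh, hmin, hmax⟩ := h₁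
  obtain ⟨γ, _, g, hg, gmin, gmax⟩ := h₂
  let e : Finset (β ⊕ γ) ≃o Finset β × Finset γ := Finset.sumEquiv
  have ncard_preimage (s : Set (Finset β × Finset γ)) : (e ⁻¹' s).ncard = s.ncard :=
    Set.ncard_preimage_of_injective_subset_range e.injective (by simp [e.surjective.range_eq])
  refine ⟨β ⊕ γ, inferInstance, _, (hh.prod_add hg).comp_orderIso e, ?_, ?_⟩
  · rw [levelMinimals_comp_orderIso, ncard_preimage,
      levelMinimals_prod_add hh.monotone hg.monotone, Set.ncard_prod, hmin, gmin]
  · rw [levelMaximals_comp_orderIso, ncard_preimage,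
      levelMaximals_prod_add hh.monotone hg.monotone, Set.ncard_prod, hmax, gmax]

theorem hasBalancedRank_two_pow (r : ℕ) : HasBalancedRank r (2 ^ r) := by
  refine ⟨Fin r, inferInstance, Finset.card, ?_, ?_, ?_⟩
  · simpa using IsGaplessRank.card (Fin r)
  · simp [levelMinimals_eq_univ Finset.card_strictMono, Set.ncard_univ]
  · simp [levelMaximals_eq_univ Finset.card_strictMono, Set.ncard_univ]

/-- The rank of `a` read off from the layers `D i`: the number of them that have a member
below `a`. -/
def layerRank {P : Type*} [LE P] [DecidableLE P] {t : ℕ} (D : Fin t → Finset P) (a : P) : ℕ :=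
  #{i | ∃ b ∈ D i, b ≤ a}

theorem layerRank_mono {P : Type*} [Preorder P] [DecidableLE P] {t : ℕ} (D : Fin t → Finset P) :
    Monotone (layerRank D) := fun _ _ hab =>
  Finset.card_le_card <| Finset.monotone_filter_right _ fun _ _ ⟨b, hb, hba⟩ =>
    ⟨b, hb, hba.trans hab⟩

theorem layerRank_le {P : Type*} [LE P] [DecidableLE P] {t : ℕ} (D : Fin t → Finset P) (a : P) :
    layerRank D a ≤ t :=
  (Finset.card_filter_le _ _).trans_eq (Finset.card_fin t)

/-- The layers of a rank function on the subsets of six points. Together with `∅`, these `14` sets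
are its level-minimal sets, and the small members of a `30`-member saturated `6`-Sperner system. -/
def sixPointLayers : Fin 4 → Finset (Finset (Fin 6)) :=
  ![{{0}, {1}, {2}, {3}},
    {{2, 3}, {0, 4}, {1, 4}, {0, 5}, {1, 5}},
    {{1, 2, 4}, {0, 3, 4}, {1, 2, 5}, {0, 3, 5}},
    {{0, 1, 2, 4}}]

theorem isGaplessRank_layerRank_sixPointLayers : IsGaplessRank (layerRank sixPointLayers) 4 where
  monotone := layerRank_mono _
  le_height := layerRank_le _
  exists_le_add_one_eq := by decide +kernel
  exists_ge_eq_add_one := by decide +kernel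

theorem hasBalancedRank_four_fifteen : HasBalancedRank 4 15 := by
  refine ⟨Fin 6, inferInstance, _, isGaplessRank_layerRank_sixPointLayers, ?_, ?_⟩
  · rw [levelMinimals, Set.ncard_eq_toFinset_card']
    decide +kernel
  · rw [levelMaximals, Set.ncard_eq_toFinset_card']
    decide +kernel

theorem hasBalancedRank_fifteen_pow_mul_two_pow (j r : ℕ) :
    HasBalancedRank (4 * j + r) (15 ^ j * 2 ^ r) := by
  induction j with
  | zero => simpa using hasBalancedRank_two_pow r
  | succ j ih =>
    convert hasBalancedRank_four_fifteen.add ih using 1 <;> ring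

end BalancedRank

section Saturation

variable {α β : Type*} [DecidableEq α]

theorem hasChainOfLen_of_ltSeries {F : Finset (Finset α)} (p : LTSeries F) :
    HasChainOfLen F (p.length + 1) :=
  ⟨fun i => p i, fun _ _ hij => p.strictMono hij, fun i => (p i).2⟩

theorem hasChainOfLen_insert_of_ltSeries {F : Finset (Finset α)} {S : Finset α} (p q : LTSeries F)
    (hp : (p.last : Finset α) < S) (hq : S < q.head) :
    HasChainOfLen (insert S F) (p.length + q.length + 3) := by
  let incl (A : F) : (insert S F : Finset (Finset α)) := ⟨A, mem_insert_of_mem A.2⟩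
  have incl_strictMono : StrictMono incl := fun _ _ hlt => hlt
  let upper := (q.map incl incl_strictMono).cons ⟨S, mem_insert_self S F⟩ hq
  have upper_head : upper.head = ⟨S, mem_insert_self S F⟩ := RelSeries.head_cons _ _ _
  let r := (p.map incl incl_strictMono).append upper (by rwa [upper_head])
  have upper_length : upper.length = q.length + 1 := RelSeries.cons_length _ _ _
  have r_length : r.length = p.length + upper.length + 1 := RelSeries.append_length _ _ _
  have length_eq : r.length + 1 = p.length + q.length + 3 := by omega
  exact length_eq ▸ hasChainOfLen_of_ltSeries r

theorem not_hasChainOfLen_of_strictMonoOn {F : Finset (Finset α)} {ρ : Finset α → ℕ} {m : ℕ}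
    (hρ : StrictMonoOn ρ F) (hlt : ∀ A ∈ F, ρ A < m) : ¬ HasChainOfLen F (m + 1) := by
  rintro ⟨C, hC, hCF⟩
  have hmono : StrictMono fun i => (⟨ρ (C i), hlt _ (hCF i)⟩ : Fin m) :=
    fun i j hij => hρ (hCF i) (hCF j) (hC hij)
  simpa using Fintype.card_le_of_injective _ hmono.injective

theorem isSatKSperner_zero (X : Finset α) : IsSatKSperner X ∅ 0 :=
  ⟨by simp, not_hasChainOfLen_of_strictMonoOn (ρ := Finset.card) (by simp [StrictMonoOn]) (by simp),
    fun S _ _ => hasChainOfLen_of_ltSeries (RelSeries.singleton _ ⟨S, by simp⟩)⟩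

theorem isSatKSperner_one (X : Finset α) : IsSatKSperner X {∅} 1 := by
  refine ⟨by simp, not_hasChainOfLen_of_strictMonoOn (ρ := fun _ => 0) (by simp) (by simp),
    fun S _ hS => ?_⟩
  have hlt : (∅ : Finset α) < S := Finset.empty_ssubset.2 <|
    Finset.nonempty_iff_ne_empty.2 fun h => hS (by simp [h])
  let p : LTSeries (insert S {∅} : Finset (Finset α)) := RelSeries.singleton _ ⟨S, by simp⟩
  exact hasChainOfLen_of_ltSeries (p.cons ⟨∅, by simp⟩ hlt)

variable [Fintype β] {X : Finset α} {f : β ↪ α} {h : Finset β → ℕ}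

theorem preimage_map_union_sdiff (X : Finset α) (f : β ↪ α) (A : Finset β) :
    (A.map f ∪ (X \ univ.map f)).preimage f f.injective.injOn = A := by
  ext
  simp

/-- The copy of `P(β)` inside `P(X)` whose members contain every point of `X` outside the image of
`f : β ↪ α`; the copy whose members contain no such point is `Finset.mapEmbedding f`. -/
def largeCopy (X : Finset α) (f : β ↪ α) : Finset β ↪o Finset α :=
  OrderEmbedding.ofMapLEIff (fun A => A.map f ∪ (X \ univ.map f)) fun A B =>
    ⟨fun hAB => by
      simpa only [preimage_map_union_sdiff] using monotone_preimage f.injective hAB,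
    fun hAB => union_subset_union_left (map_subset_map.2 hAB)⟩

theorem preimage_largeCopy (A : Finset β) :
    (largeCopy X f A).preimage f f.injective.injOn = A :=
  preimage_map_union_sdiff X f A

theorem sdiff_subset_largeCopy (A : Finset β) : X \ univ.map f ⊆ largeCopy X f A :=
  subset_union_right

theorem not_sdiff_subset_map (hf : univ.map f ⊂ X) (A : Finset β) :
    ¬ X \ univ.map f ⊆ A.map f := by
  intro hsub
  obtain ⟨x, hxX, hxf⟩ := exists_of_ssubset hf
  exact hxf (map_subset_map.2 (subset_univ A) (hsub (mem_sdiff.2 ⟨hxX, hxf⟩)))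

theorem subset_largeCopy_of_preimage_subset {S : Finset α} {A : Finset β} (hS : S ⊆ X)
    (hA : S.preimage f f.injective.injOn ⊆ A) : S ⊆ largeCopy X f A := by
  intro x hx
  by_cases hxf : x ∈ univ.map f
  · obtain ⟨i, -, rfl⟩ := mem_map.1 hxf
    exact mem_union_left _ (mem_map_of_mem f (hA (mem_preimage.2 hx)))
  · exact mem_union_right _ (mem_sdiff.2 ⟨hS hx, hxf⟩)

/-- The family in `P(X)` formed by the level-minimal sets of `h`, without the points of `X` outside
the image of `f`, and the level-maximal sets of `h`, with all these points. -/
noncomputable def gluedSystem (X : Finset α) (f : β ↪ α) (h : Finset β → ℕ) : Finset (Finset α) :=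
  (Set.toFinite (mapEmbedding f '' levelMinimals h ∪ largeCopy X f '' levelMaximals h)).toFinset

theorem mem_gluedSystem {S : Finset α} :
    S ∈ gluedSystem X f h ↔
      (∃ A ∈ levelMinimals h, A.map f = S) ∨ ∃ A ∈ levelMaximals h, largeCopy X f A = S := by
  simp [gluedSystem]

theorem card_gluedSystem_le (X : Finset α) (f : β ↪ α) (h : Finset β → ℕ) :
    #(gluedSystem X f h) ≤ (levelMinimals h).ncard + (levelMaximals h).ncard := by
  rw [gluedSystem, ← Set.ncard_eq_toFinset_card _ (Set.toFinite _)]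
  exact (Set.ncard_union_le _ _).trans (add_le_add Set.ncard_image_le Set.ncard_image_le)

/-- The rank of `S ⊆ X` that extends the rank function `h` by counting the points of `X` outside the
image of `f` as one additional rank. -/
noncomputable def gluedRank (X : Finset α) (f : β ↪ α) (h : Finset β → ℕ) (S : Finset α) : ℕ :=
  h (S.preimage f f.injective.injOn) + if X \ univ.map f ⊆ S then 1 else 0

theorem gluedRank_map (hf : univ.map f ⊂ X) (A : Finset β) : gluedRank X f h (A.map f) = h A := by
  simp [gluedRank, not_sdiff_subset_map hf]

theorem gluedRank_largeCopy (A : Finset β) : gluedRank X f h (largeCopy X f A) = h A + 1 := by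
  simp [gluedRank, preimage_largeCopy, sdiff_subset_largeCopy]

theorem strictMonoOn_gluedRank (hf : univ.map f ⊂ X) (hh : Monotone h) :
    StrictMonoOn (gluedRank X f h) (gluedSystem X f h) := by
  intro S hS T hT hlt
  rcases mem_gluedSystem.1 hS with ⟨A, -, rfl⟩ | ⟨A, hA, rfl⟩ <;>
    rcases mem_gluedSystem.1 hT with ⟨B, hB, rfl⟩ | ⟨B, -, rfl⟩
  · rw [gluedRank_map hf, gluedRank_map hf]
    exact hB A (map_ssubset_map.1 hlt)
  · rw [gluedRank_map hf, gluedRank_largeCopy]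
    have hAB : A ≤ B := by
      simpa only [preimage_map, preimage_largeCopy] using monotone_preimage f.injective hlt.le
    exact Nat.lt_succ_of_le (hh hAB)
  · exact absurd ((sdiff_subset_largeCopy A).trans hlt.le) (not_sdiff_subset_map hf B)
  · rw [gluedRank_largeCopy, gluedRank_largeCopy]
    exact Nat.succ_lt_succ (hA B ((largeCopy X f).lt_iff_lt.1 hlt))

theorem gluedSystem_subset (hf : univ.map f ⊆ X) {S : Finset α} (hS : S ∈ gluedSystem X f h) :
    S ⊆ X := by
  have map_subset (A : Finset β) : A.map f ⊆ X := (map_subset_map.2 (subset_univ A)).trans hf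
  rcases mem_gluedSystem.1 hS with ⟨A, -, rfl⟩ | ⟨A, -, rfl⟩
  · exact map_subset A
  · exact union_subset (map_subset A) sdiff_subset

theorem hasChainOfLen_insert_gluedSystem {t : ℕ} (hh : IsGaplessRank h t) {S : Finset α}
    (hSX : S ⊆ X) (hS : S ∉ gluedSystem X f h) :
    HasChainOfLen (insert S (gluedSystem X f h)) (t + 3) := by
  let small (A : levelMinimals h) : gluedSystem X f h :=
    ⟨(A : Finset β).map f, mem_gluedSystem.2 (.inl ⟨A, A.2, rfl⟩)⟩
  let large (A : levelMaximals h) : gluedSystem X f h :=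
    ⟨largeCopy X f A, mem_gluedSystem.2 (.inr ⟨A, A.2, rfl⟩)⟩
  have small_strictMono : StrictMono small := fun _ _ hlt => map_ssubset_map.2 hlt
  have large_strictMono : StrictMono large := fun _ _ hlt => (largeCopy X f).lt_iff_lt.2 hlt
  obtain ⟨p, hp, hpS⟩ := hh.exists_ltSeries_levelMinimals (S.preimage f f.injective.injOn)
  obtain ⟨q, hq, hqS⟩ := hh.exists_ltSeries_levelMaximals (S.preimage f f.injective.injOn)
  have small_lt : (small p.last : Finset α) < S :=
    (map_subset_iff_subset_preimage.2 hpS).lt_of_ne (ne_of_mem_of_not_mem (small _).2 hS)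
  have lt_large : S < large q.head :=
    (subset_largeCopy_of_preimage_subset hSX hqS).lt_of_ne
      (ne_of_mem_of_not_mem (large _).2 hS).symm
  have length_add : p.length + q.length = t := by
    rw [hp, hq]
    exact Nat.add_sub_of_le (hh.le_height _)
  simpa [length_add] using hasChainOfLen_insert_of_ltSeries (p.map small small_strictMono)
    (q.map large large_strictMono) (by simpa using small_lt) (by simpa using lt_large)

theorem isSatKSperner_gluedSystem {t : ℕ} (hf : univ.map f ⊂ X) (hh : IsGaplessRank h t) :
    IsSatKSperner X (gluedSystem X f h) (t + 2) := by
  refine ⟨fun _ => gluedSystem_subset hf.subset,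
    not_hasChainOfLen_of_strictMonoOn (strictMonoOn_gluedRank hf hh.monotone) fun S _ => ?_,
    fun _ => hasChainOfLen_insert_gluedSystem hh⟩
  have := hh.le_height (S.preimage f f.injective.injOn)
  unfold gluedRank
  split_ifs <;> omega

end Saturation

theorem HasBalancedRank.exists_isSatKSperner {t s : ℕ} (hts : HasBalancedRank t s) :
    ∃ n₀ : ℕ, ∀ {α : Type*} [DecidableEq α] (X : Finset α), n₀ ≤ #X →
      ∃ F : Finset (Finset α), IsSatKSperner X F (t + 2) ∧ #F ≤ 2 * s := by
  obtain ⟨β, _, h, hh, hmin, hmax⟩ := hts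
  refine ⟨Fintype.card β + 1, fun X hX => ?_⟩
  obtain ⟨f, hf⟩ := Function.Embedding.exists_of_card_le_finset (α := β) (Nat.le_of_succ_le hX)
  have hfX : univ.map f ⊂ X := by
    refine ssubset_of_subset_of_ne (by simpa [← coe_subset] using hf) fun heq => ?_
    have hcard := congrArg Finset.card heq
    rw [card_map, card_univ] at hcard
    omega
  refine ⟨gluedSystem X f h, isSatKSperner_gluedSystem hfX hh, ?_⟩
  have := card_gluedSystem_le X f h
  omega

theorem two_mul_fifteen_pow_mul_two_pow_le (j : ℕ) {r : ℕ} (hr : r < 4) :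
    ((2 * (15 ^ j * 2 ^ r) : ℕ) : ℝ) ≤ 15 ^ (((4 * j + r + 2 : ℕ) : ℝ) / 4) := by
  have pow_four_le : (2 * (15 ^ j * 2 ^ r)) ^ 4 ≤ 15 ^ (4 * j + r + 2) := by
    calc (2 * (15 ^ j * 2 ^ r)) ^ 4 = 15 ^ (4 * j) * (2 * 2 ^ r) ^ 4 := by ring
      _ ≤ 15 ^ (4 * j) * 15 ^ (r + 2) := by
        refine Nat.mul_le_mul_left _ ?_
        interval_cases r <;> norm_num
      _ = 15 ^ (4 * j + r + 2) := by ring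
  rw [div_eq_mul_inv, Real.rpow_mul (by norm_num), Real.rpow_natCast,
    Real.le_rpow_inv_iff_of_pos (by positivity) (by positivity) (by norm_num)]
  exact_mod_cast pow_four_le

theorem two_rpow_mul_eq_fifteen_rpow (x : ℝ) :
    (2 : ℝ) ^ ((1 - (1 - Real.logb 2 15 / 4)) * x) = 15 ^ (x / 4) := by
  rw [show (1 - (1 - Real.logb 2 15 / 4)) * x = Real.logb 2 15 * (x / 4) by ring,
    Real.rpow_mul zero_le_two, Real.rpow_logb two_pos (by norm_num) (by norm_num)]

theorem upper_bound_15_general (k : ℕ) :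
    ∃ n₀ : ℕ, ∀ {α : Type*} [DecidableEq α] (X : Finset α), n₀ ≤ #X →
      ∃ F : Finset (Finset α), IsSatKSperner X F k ∧ (#F : ℝ) ≤ 15 ^ ((k : ℝ) / 4) := by
  match k with
  | 0 => exact ⟨0, fun X _ => ⟨∅, isSatKSperner_zero X, by simp⟩⟩
  | 1 =>
    refine ⟨0, fun X _ => ⟨{∅}, isSatKSperner_one X, ?_⟩⟩
    simpa using Real.one_le_rpow (x := 15) (by norm_num) (by norm_num)
  | t + 2 =>
    obtain ⟨j, r, hr, rfl⟩ : ∃ j r, r < 4 ∧ t = 4 * j + r :=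
      ⟨t / 4, t % 4, Nat.mod_lt _ (by norm_num), (Nat.div_add_mod t 4).symm⟩
    obtain ⟨n₀, hn₀⟩ := (hasBalancedRank_fifteen_pow_mul_two_pow j r).exists_isSatKSperner
    refine ⟨n₀, fun X hX => ?_⟩
    obtain ⟨F, hF, hcard⟩ := hn₀ X hX
    exact ⟨F, hF, (Nat.cast_le.2 hcard).trans (two_mul_fifteen_pow_mul_two_pow_le j hr)⟩

theorem upper_bound_15 :
    ∀ k : ℕ, 6 ≤ k → ∃ n₀ : ℕ, ∀ n : ℕ, n₀ ≤ n →
      ∃ F : Finset (Finset ℕ), IsSatKSperner (Finset.Icc 1 n) F k ∧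
        (F.card : ℝ) ≤ 2 ^ ((1 - (1 - Real.logb 2 15 / 4)) * k) := by
  intro k _
  simp only [two_rpow_mul_eq_fifteen_rpow]
  exact (upper_bound_15_general k).imp fun _ h n hn => h (Icc 1 n) (by simpa using hn)
end
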